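/- For every subadditive potential Φ over (X,T): the map μ ↦ χ(μ,Φ) is upper semicontinuous on M(X,T) with respect to the weak* topology, the set O of observable measures is a nonempty weak*-compact subset of M(X,T), and consequently there exists μ ∈ O with χ(μ,Φ) = sup{χ(ν,Φ) : ν ∈ O}; that is, a Lyapunov maximizing observable measure for Φ always exists. -/

import Mathlib

open MeasureTheory Filter Topology
open scoped ENNReal

/-- The empirical probability measure `γ_{n+1,x} = (1/(n+1)) ∑_{j≤n} δ_{T^j x}` of the orbit
of `x` (indexed so that it is a probability measure for every index). -/
noncomputable def empiricalPM {X : Type*} [MeasurableSpace X] (T : X → X) (x : X) (n : ℕ) :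
    MeasureTheory.ProbabilityMeasure X :=
  ⟨(n + 1 : ℝ≥0∞)⁻¹ • ∑ j ∈ Finset.range (n + 1), MeasureTheory.Measure.dirac (T^[j] x), by
    constructor
    rw [Measure.smul_apply, Measure.finset_sum_apply]
    simp
    rw [ENNReal.inv_mul_cancel] <;> simp⟩

/-- The set `V(x)` of weak* limit points of the sequence of empirical measures of `x`. -/
def limitSet {X : Type*} [MeasurableSpace X] [TopologicalSpace X] [OpensMeasurableSpace X]
    (T : X → X) (x : X) : Set (MeasureTheory.ProbabilityMeasure X) :=
  {μ | ∃ φ : ℕ → ℕ, StrictMono φ ∧ Tendsto (fun j => empiricalPM T x (φ j)) atTop (𝓝 μ)}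

/-- `μ` is an observable (physical-like) measure for `(X, T, Leb)`: every weak* neighbourhood
`U` of `μ` (equivalently, every ε-ball around `μ` in a compatible metric) is intersected by
`V(x)` for a positive `Leb`-measure set of points `x`. -/
def IsObservable {X : Type*} [MeasurableSpace X] [TopologicalSpace X] [OpensMeasurableSpace X]
    (Leb : MeasureTheory.Measure X) (T : X → X) (μ : MeasureTheory.ProbabilityMeasure X) : Prop :=
  ∀ U : Set (MeasureTheory.ProbabilityMeasure X), IsOpen U → μ ∈ U →
    0 < Leb {x | (limitSet T x ∩ U).Nonempty}

/-- The Lyapunov exponent `χ(μ, Φ) = lim_n (1/n) ∫ log φ_n dμ` of a potential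
`Φ = {log φ_n}` (for invariant `μ` the limit exists by subadditivity, so it equals the
`liminf` used here); it takes values in `[-∞, ∞)`, i.e. in `EReal`. -/
noncomputable def lyapExp {X : Type*} [MeasurableSpace X] (φ : ℕ → X → ℝ)
    (μ : MeasureTheory.Measure X) : EReal :=
  liminf (fun n : ℕ => (((n : ℝ)⁻¹ * ∫ x, Real.log (φ n x) ∂μ : ℝ) : EReal)) atTop

theorem integral_empiricalPM {X : Type*} [MetricSpace X] [MeasurableSpace X] [BorelSpace X]
    (T : X → X) (x : X) (n : ℕ) (f : BoundedContinuousFunction X ℝ) :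
    ∫ y, f y ∂(empiricalPM T x n : Measure X) =
      ((n : ℝ) + 1)⁻¹ * ∑ j ∈ Finset.range (n + 1), f (T^[j] x) := by
  have h : (empiricalPM T x n : Measure X) =
    (n + 1 : ℝ≥0∞)⁻¹ • ∑ j ∈ Finset.range (n + 1), Measure.dirac (T^[j] x) := rfl
  rw [h, integral_smul_measure, integral_finsetSum_measure fun i _ => f.integrable _]
  have h' : ((n : ℝ≥0∞) + 1).toReal = n + 1 := by
    rw [ENNReal.toReal_add (by simp) (by simp)]; simp
  simp [integral_dirac, h']

theorem isClosed_setOf_map_eq {X : Type*} [MetricSpace X] [MeasurableSpace X] [BorelSpace X]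
    {T : X → X} (hT : Continuous T) :
    IsClosed {μ : ProbabilityMeasure X | (μ : Measure X).map T = (μ : Measure X)} := by
  have h : {μ : ProbabilityMeasure X | (μ : Measure X).map T = (μ : Measure X)} =
      {μ : ProbabilityMeasure X | μ.map hT.measurable.aemeasurable = μ} := by
    ext μ
    simp only [Set.mem_ofPred_eq]
    rw [← ProbabilityMeasure.toMeasure_injective.eq_iff, ProbabilityMeasure.toMeasure_map]
  rw [h]
  exact isClosed_eq (ProbabilityMeasure.continuous_map hT) continuous_id

/-- Limit points of empirical measures are invariant. -/
theorem map_eq_of_mem_limitSet {X : Type*} [MetricSpace X] [MeasurableSpace X] [BorelSpace X]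
    {T : X → X} (hT : Continuous T) {x : X} {μ : ProbabilityMeasure X}
    (hμ : μ ∈ limitSet T x) : (μ : Measure X).map T = (μ : Measure X) := by
  obtain ⟨k, hk, hlim⟩ := hμ
  have := Measure.isProbabilityMeasure_map (μ := (μ : Measure X)) hT.measurable.aemeasurable
  refine ext_of_forall_integral_eq_of_IsFiniteMeasure fun f => ?_
  rw [integral_map hT.measurable.aemeasurable f.continuous.aestronglyMeasurable]
  rw [ProbabilityMeasure.tendsto_iff_forall_integral_tendsto] at hlim
  have h := (hlim (f.compContinuous ⟨T, hT⟩)).sub (hlim f)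
  have hzero : Tendsto (fun j => ∫ y, f.compContinuous ⟨T, hT⟩ y
      ∂(empiricalPM T x (k j) : Measure X) - ∫ y, f y ∂(empiricalPM T x (k j) : Measure X))
      atTop (𝓝 0) := by
    have hb : Tendsto (fun j => (((k j : ℕ) : ℝ) + 1)⁻¹ * (2 * ‖f‖)) atTop (𝓝 0) := by
      have h1 : Tendsto (fun n : ℕ => ((n : ℝ) + 1)⁻¹) atTop (𝓝 0) := by
        simpa using tendsto_one_div_add_atTop_nhds_zero_nat (𝕜 := ℝ)
      simpa using (h1.comp hk.tendsto_atTop).mul_const (2 * ‖f‖)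
    refine squeeze_zero_norm (fun j => ?_) hb
    rw [integral_empiricalPM, integral_empiricalPM, ← mul_sub, ← Finset.sum_sub_distrib]
    have hs : ∑ i ∈ Finset.range (k j + 1),
        (f.compContinuous ⟨T, hT⟩ (T^[i] x) - f (T^[i] x)) = f (T^[k j + 1] x) - f x := by
      have hcoe : ∀ i, f.compContinuous ⟨T, hT⟩ (T^[i] x) = f (T^[i + 1] x) := fun i =>
        congrArg f (Function.iterate_succ_apply' T i x).symm
      simp only [hcoe]
      exact Finset.sum_range_sub (fun i => f (T^[i] x)) (k j + 1)
    rw [hs, norm_mul, Real.norm_of_nonneg (by positivity)]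
    gcongr
    calc ‖f (T^[k j + 1] x) - f x‖ ≤ ‖f (T^[k j + 1] x)‖ + ‖f x‖ := norm_sub_le _ _
      _ ≤ 2 * ‖f‖ := by linarith [f.norm_coe_le_norm (T^[k j + 1] x), f.norm_coe_le_norm x]
  exact sub_eq_zero.mp (tendsto_nhds_unique h hzero)

theorem limitSet_nonempty {X : Type*} [MetricSpace X] [CompactSpace X] [MeasurableSpace X]
    [BorelSpace X] (T : X → X) (x : X) : (limitSet T x).Nonempty := by
  obtain ⟨μ, k, hk, h⟩ := CompactSpace.tendsto_subseq (empiricalPM T x)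
  exact ⟨μ, k, hk, h⟩

theorem isClosed_setOf_isObservable {X : Type*} [MeasurableSpace X] [TopologicalSpace X]
    [OpensMeasurableSpace X] (Leb : Measure X) (T : X → X) :
    IsClosed {μ : ProbabilityMeasure X | IsObservable Leb T μ} := by
  rw [← isOpen_compl_iff, isOpen_iff_forall_mem_open]
  intro μ hμ
  simp only [Set.mem_compl_iff, Set.mem_ofPred_eq, IsObservable, not_forall] at hμ
  obtain ⟨U, hU, hμU, hnull⟩ := hμ
  exact ⟨U, fun ν hν hobs => hnull (hobs U hU hν), hU, hμU⟩

theorem exists_isObservable {X : Type*} [MetricSpace X] [CompactSpace X] [MeasurableSpace X]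
    [BorelSpace X] (Leb : Measure X) [NeZero Leb] (T : X → X) :
    ∃ μ : ProbabilityMeasure X, IsObservable Leb T μ := by
  by_contra! hnone
  simp only [IsObservable, not_forall, not_lt, nonpos_iff_eq_zero] at hnone
  choose U hU hmem hnull using hnone
  obtain ⟨t, ht⟩ := isCompact_univ.elim_finite_subcover U hU
    fun μ _ => Set.mem_iUnion.2 ⟨μ, hmem μ⟩
  have hcover : (Set.univ : Set X) ⊆ ⋃ μ ∈ t, {x | (limitSet T x ∩ U μ).Nonempty} := by
    intro x _
    obtain ⟨ν, hν⟩ := limitSet_nonempty T x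
    obtain ⟨μ, hμ, hνμ⟩ := Set.mem_iUnion₂.1 (ht (Set.mem_univ ν))
    exact Set.mem_iUnion₂.2 ⟨μ, hμ, ν, hν, hνμ⟩
  have h0 : Leb Set.univ = 0 :=
    measure_mono_null hcover ((measure_biUnion_null_iff t.countable_toSet).2 fun μ _ => hnull μ)
  exact NeZero.ne Leb (Measure.measure_univ_eq_zero.1 h0)

theorem IsObservable.map_eq {X : Type*} [MetricSpace X] [MeasurableSpace X] [BorelSpace X]
    {Leb : Measure X} {T : X → X} (hT : Continuous T) {μ : ProbabilityMeasure X}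
    (hμ : IsObservable Leb T μ) : (μ : Measure X).map T = (μ : Measure X) := by
  by_contra hne
  have hpos := hμ _ (isClosed_setOf_map_eq hT).isOpen_compl hne
  have hempty : {x | (limitSet T x ∩
      {μ : ProbabilityMeasure X | (μ : Measure X).map T = (μ : Measure X)}ᶜ).Nonempty} = ∅ := by
    refine Set.eq_empty_of_forall_notMem ?_
    rintro x ⟨ν, hν, hν'⟩
    exact hν' (map_eq_of_mem_limitSet hT hν)
  simp [hempty] at hpos

/-- For a sequence that is subadditive on positive indices, `liminf a n / n = inf a n / n`. -/
theorem liminf_inv_mul_eq_iInf {a : ℕ → ℝ}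
    (ha : ∀ m n, 1 ≤ m → 1 ≤ n → a (m + n) ≤ a m + a n) :
    liminf (fun n : ℕ => (((n : ℝ)⁻¹ * a n : ℝ) : EReal)) atTop =
      ⨅ n : ℕ, ((((n + 1 : ℕ) : ℝ)⁻¹ * a (n + 1) : ℝ) : EReal) := by
  refine le_antisymm (le_iInf fun n => liminf_le_of_frequently_le' ?_) ?_
  · have hmul : ∀ j : ℕ, a ((j + 1) * (n + 1)) ≤ ((j + 1 : ℕ) : ℝ) * a (n + 1) := by
      intro j
      induction j with
      | zero => simp
      | succ j ih =>
        have := ha ((j + 1) * (n + 1)) (n + 1) (Nat.mul_pos (by simp) (by simp)) (by simp)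
        rw [show (j + 1 + 1) * (n + 1) = (j + 1) * (n + 1) + (n + 1) by ring]
        push_cast at ih ⊢
        linarith
    refine frequently_atTop.2 fun N => ⟨(N + 1) * (n + 1), by nlinarith, ?_⟩
    rw [EReal.coe_le_coe_iff]
    calc (((N + 1) * (n + 1) : ℕ) : ℝ)⁻¹ * a ((N + 1) * (n + 1))
        ≤ (((N + 1) * (n + 1) : ℕ) : ℝ)⁻¹ * (((N + 1 : ℕ) : ℝ) * a (n + 1)) := by
          gcongr
          exact hmul N
      _ = ((n + 1 : ℕ) : ℝ)⁻¹ * a (n + 1) := by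
          push_cast
          field_simp
  · refine le_liminf_of_le (by isBoundedDefault) ?_
    filter_upwards [eventually_ge_atTop 1] with n hn
    obtain ⟨m, rfl⟩ := Nat.exists_eq_add_of_le' hn
    exact iInf_le (fun m : ℕ => ((((m + 1 : ℕ) : ℝ)⁻¹ * a (m + 1) : ℝ) : EReal)) m

theorem lyapExp_eq_iInf {X : Type*} [MetricSpace X] [CompactSpace X] [MeasurableSpace X]
    [BorelSpace X] {T : X → X} (hT : Continuous T) {φ : ℕ → X → ℝ}
    (hcont : ∀ n, 1 ≤ n → Continuous (φ n)) (hpos : ∀ n, 1 ≤ n → ∀ x, 0 < φ n x)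
    (hsub : ∀ m n, 1 ≤ m → 1 ≤ n → ∀ x, φ (m + n) x ≤ φ m x * φ n (T^[m] x))
    {μ : Measure X} [IsFiniteMeasure μ] (hμ : μ.map T = μ) :
    lyapExp φ μ =
      ⨅ n : ℕ, ((((n + 1 : ℕ) : ℝ)⁻¹ * ∫ x, Real.log (φ (n + 1) x) ∂μ : ℝ) : EReal) := by
  have hlog : ∀ n, 1 ≤ n → Continuous fun x => Real.log (φ n x) := fun n hn =>
    (hcont n hn).log fun x => (hpos n hn x).ne'
  have hint : ∀ f : X → ℝ, Continuous f → Integrable f μ := fun f hf =>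
    (BoundedContinuousFunction.mkOfCompact ⟨f, hf⟩).integrable μ
  have hmp : MeasurePreserving T μ μ := ⟨hT.measurable, hμ⟩
  refine liminf_inv_mul_eq_iInf (a := fun n => ∫ x, Real.log (φ n x) ∂μ) fun m n hm hn => ?_
  have hcomp : Continuous fun x => Real.log (φ n (T^[m] x)) := (hlog n hn).comp (hT.iterate m)
  have hshift : ∫ x, Real.log (φ n (T^[m] x)) ∂μ = ∫ x, Real.log (φ n x) ∂μ := by
    conv_rhs => rw [← (hmp.iterate m).map_eq]
    rw [integral_map (hT.iterate m).measurable.aemeasurable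
      (hlog n hn).aestronglyMeasurable]
  rw [← hshift, ← integral_add (hint _ (hlog m hm)) (hint _ hcomp)]
  refine integral_mono (hint _ (hlog _ (by omega))) ((hint _ (hlog m hm)).add (hint _ hcomp))
    fun x => ?_
  dsimp only
  rw [← Real.log_mul (hpos m hm x).ne' (hpos n hn _).ne']
  exact Real.log_le_log (hpos _ (by omega) x) (hsub m n hm hn x)

theorem upperSemicontinuousOn_lyapExp {X : Type*} [MetricSpace X] [CompactSpace X]
    [MeasurableSpace X] [BorelSpace X] {T : X → X} (hT : Continuous T) {φ : ℕ → X → ℝ}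
    (hcont : ∀ n, 1 ≤ n → Continuous (φ n)) (hpos : ∀ n, 1 ≤ n → ∀ x, 0 < φ n x)
    (hsub : ∀ m n, 1 ≤ m → 1 ≤ n → ∀ x, φ (m + n) x ≤ φ m x * φ n (T^[m] x)) :
    UpperSemicontinuousOn (fun μ : ProbabilityMeasure X => lyapExp φ (μ : Measure X))
      {μ : ProbabilityMeasure X | (μ : Measure X).map T = (μ : Measure X)} := by
  have husc : UpperSemicontinuousOn (fun μ : ProbabilityMeasure X =>
      ⨅ n : ℕ, ((((n + 1 : ℕ) : ℝ)⁻¹ * ∫ x, Real.log (φ (n + 1) x) ∂(μ : Measure X) : ℝ) :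
        EReal))
      {μ : ProbabilityMeasure X | (μ : Measure X).map T = (μ : Measure X)} := by
    refine upperSemicontinuousOn_iInf fun n => ContinuousOn.upperSemicontinuousOn ?_
    have hlog : Continuous fun x => Real.log (φ (n + 1) x) :=
      (hcont _ (by omega)).log fun x => (hpos _ (by omega) x).ne'
    have := ProbabilityMeasure.continuous_integral_boundedContinuousFunction (X := X)
      (BoundedContinuousFunction.mkOfCompact ⟨_, hlog⟩)
    exact (continuous_coe_real_ereal.comp (continuous_const.mul this)).continuousOn
  intro μ hμ
  exact UpperSemicontinuousWithinAt.congr_of_eventuallyEq (husc μ hμ) hμ <|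
    eventually_nhdsWithin_of_forall fun ν hν => (lyapExp_eq_iInf hT hcont hpos hsub hν).symm

/-- **Remark 1.4 / existence of Lyapunov maximizing observable measures.** For every
subadditive potential `Φ = {log φ_n}` over `(X, T)`: the map `μ ↦ χ(μ, Φ)` is upper
semicontinuous on `M(X,T)` for the weak* topology, the set `O` of observable measures is a
nonempty weak*-compact subset of `M(X,T)`, and consequently some observable measure attains
`sup {χ(ν,Φ) : ν ∈ O}`, i.e. a Lyapunov maximizing observable measure exists. -/
theorem exists_lyapunov_maximizing_observable
    {X : Type*} [MetricSpace X] [CompactSpace X] [MeasurableSpace X] [BorelSpace X]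
    (T : X → X) (hT : IsHomeomorph T)
    (Leb : MeasureTheory.Measure X) [IsProbabilityMeasure Leb]
    (φ : ℕ → X → ℝ)
    (hcont : ∀ n, 1 ≤ n → Continuous (φ n))
    (hpos : ∀ n, 1 ≤ n → ∀ x, 0 < φ n x)
    (hsub : ∀ m n, 1 ≤ m → 1 ≤ n → ∀ x, φ (m + n) x ≤ φ m x * φ n (T^[m] x)) :
    UpperSemicontinuousOn (fun μ : ProbabilityMeasure X => lyapExp φ (μ : Measure X))
        {μ : ProbabilityMeasure X | (μ : Measure X).map T = (μ : Measure X)} ∧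
      {μ : ProbabilityMeasure X | IsObservable Leb T μ}.Nonempty ∧
      IsCompact {μ : ProbabilityMeasure X | IsObservable Leb T μ} ∧
      {μ : ProbabilityMeasure X | IsObservable Leb T μ} ⊆
        {μ : ProbabilityMeasure X | (μ : Measure X).map T = (μ : Measure X)} ∧
      ∃ μ : ProbabilityMeasure X, IsObservable Leb T μ ∧
        lyapExp φ (μ : Measure X) =
          sSup {c : EReal | ∃ ν : ProbabilityMeasure X,
            IsObservable Leb T ν ∧ c = lyapExp φ (ν : Measure X)} := by
  have hTc := hT.continuous
  have husc := upperSemicontinuousOn_lyapExp hTc hcont hpos hsub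
  have hne : {μ : ProbabilityMeasure X | IsObservable Leb T μ}.Nonempty :=
    exists_isObservable Leb T
  have hcpt := (isClosed_setOf_isObservable Leb T).isCompact
  have hinv : {μ : ProbabilityMeasure X | IsObservable Leb T μ} ⊆
      {μ : ProbabilityMeasure X | (μ : Measure X).map T = (μ : Measure X)} :=
    fun μ hμ => IsObservable.map_eq hTc hμ
  refine ⟨husc, hne, hcpt, hinv, ?_⟩
  obtain ⟨μ, hμ, hmax⟩ := (husc.mono hinv).exists_isMaxOn hne hcpt
  refine ⟨μ, hμ, le_antisymm (le_sSup ⟨μ, hμ, rfl⟩) (sSup_le ?_)⟩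
  rintro _ ⟨ν, hν, rfl⟩
  exact hmax hν
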